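/- Let H be a Hilbert space, (pₙ) a sequence of pairwise orthogonal finite rank projections summing strongly to the identity, and B ⊆ B(H) a C*-algebra commuting with every pₙ and containing pₙ K(H) pₙ for all n. If U ∈ B + K(H) is a unitary, then there exists a unitary V ∈ B with U − V ∈ K(H). -/

import Mathlib

open Filter Topology

namespace IsCompactOperator

variable {E : Type*} [NormedAddCommGroup E] [NormedSpace ℂ E] {S T : E →L[ℂ] E}

theorem clm_mul (hT : IsCompactOperator T) (S : E →L[ℂ] E) : IsCompactOperator (S * T) :=
  hT.clm_comp S

theorem mul_clm (hT : IsCompactOperator T) (S : E →L[ℂ] E) : IsCompactOperator (T * S) :=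
  hT.comp_clm S

theorem sub_clm (hS : IsCompactOperator S) (hT : IsCompactOperator T) :
    IsCompactOperator (S - T) :=
  hS.sub hT

theorem neg_clm (hT : IsCompactOperator T) : IsCompactOperator (-T) :=
  hT.neg

theorem of_finiteDimensional_range (h : FiniteDimensional ℂ (LinearMap.range (T : E →ₗ[ℂ] E))) :
    IsCompactOperator T := by
  have : LocallyCompactSpace (LinearMap.range (T : E →ₗ[ℂ] E)) :=
    have := FiniteDimensional.proper ℂ (LinearMap.range (T : E →ₗ[ℂ] E))
    inferInstance
  exact (isCompactOperator_of_locallyCompactSpace_dom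
    (T.codRestrict (LinearMap.range (T : E →ₗ[ℂ] E)) fun x ↦ ⟨x, rfl⟩)).clm_comp
    (LinearMap.range (T : E →ₗ[ℂ] E)).subtypeL

/-- A bounded sequence of operators converging strongly to zero converges to zero in norm after
composition with a compact operator. -/
theorem tendsto_mul_of_tendsto_apply (hT : IsCompactOperator T) {Q : ℕ → E →L[ℂ] E}
    (hQ : ∀ n, ‖Q n‖ ≤ 1) (hlim : ∀ x, Tendsto (fun n ↦ Q n x) atTop (𝓝 0)) :
    Tendsto (fun n ↦ Q n * T) atTop (𝓝 0) := by
  rw [Metric.tendsto_nhds]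
  intro ε hε
  obtain ⟨K, hK, hTK⟩ := IsCompactOperator.image_closedBall_subset_compact (f := T.toLinearMap) hT 1
  obtain ⟨t, -, ht, hcover⟩ := hK.finite_cover_balls (e := ε / 3) (by positivity)
  have hev : ∀ᶠ n in atTop, ∀ y ∈ t, ‖Q n y‖ < ε / 3 := by
    rw [Filter.eventually_all_finite ht]
    intro y _
    have := (hlim y).norm
    rw [norm_zero] at this
    exact this.eventually_lt_const (by positivity)
  filter_upwards [hev] with n hn
  rw [dist_zero_right]
  suffices ‖Q n * T‖ ≤ ε / 3 + ε / 3 by linarith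
  refine ContinuousLinearMap.opNorm_le_of_unit_norm (by positivity) fun x hx ↦ ?_
  obtain ⟨y, hy, hxy⟩ := Set.mem_iUnion₂.1 (hcover (hTK ⟨x, by simp [hx], rfl⟩))
  rw [Metric.mem_ball, dist_eq_norm] at hxy
  calc ‖(Q n * T) x‖ = ‖Q n (T x - y) + Q n y‖ := by simp
    _ ≤ ‖Q n (T x - y)‖ + ‖Q n y‖ := norm_add_le _ _
    _ ≤ ε / 3 + ε / 3 := by
      gcongr
      · exact ((Q n).le_of_opNorm_le (hQ n) _).trans (by simpa using hxy.le)
      · exact (hn y hy).le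

end IsCompactOperator

section Polar

variable {A : Type*} [CStarAlgebra A] [PartialOrder A] [StarOrderedRing A]

open CFC in
theorem star_mul_self_of_polar {c : A} (hc : IsUnit c) :
    star (c * (star c * c) ^ (-(1 / 2) : ℝ)) * (c * (star c * c) ^ (-(1 / 2) : ℝ)) = 1 := by
  have hd : IsUnit (star c * c) := hc.star.mul hc
  have hs : star ((star c * c) ^ (-(1 / 2) : ℝ)) = (star c * c) ^ (-(1 / 2) : ℝ) :=
    (IsSelfAdjoint.of_nonneg rpow_nonneg).star_eq
  calc _ = (star c * c) ^ (-(1 / 2) : ℝ) * (star c * c) * (star c * c) ^ (-(1 / 2) : ℝ) := by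
        rw [star_mul, hs]; simp only [mul_assoc]
    _ = (star c * c) ^ (-(1 / 2) : ℝ) * (star c * c) ^ (1 : ℝ) *
          (star c * c) ^ (-(1 / 2) : ℝ) := by
        rw [rpow_one _ (star_mul_self_nonneg c)]
    _ = 1 := by
        rw [← rpow_add hd, ← rpow_add hd]
        norm_num
        exact rpow_zero _ (star_mul_self_nonneg c)

open CFC in
theorem rpow_neg_half_sub_one {d : A} (hd : IsUnit d) (hd0 : 0 ≤ d) :
    ∃ r : A, d ^ (-(1 / 2) : ℝ) - 1 = d ^ (-1 : ℝ) * (1 - d) * r := by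
  have hu : IsUnit (d ^ (-(1 / 2) : ℝ) + 1) := by
    rw [add_comm]
    exact (isStrictlyPositive_one.add_nonneg rpow_nonneg).isUnit
  obtain ⟨u, hu⟩ := hu
  refine ⟨↑u⁻¹, ?_⟩
  rw [Units.eq_mul_inv_iff_mul_eq, hu, mul_sub]
  nth_rw 5 [← rpow_one d hd0]
  rw [← rpow_add hd, sub_mul, mul_add, ← rpow_add hd]
  norm_num
  rw [rpow_zero d hd0]
  abel

end Polar

section Projections

variable {H : Type*} [NormedAddCommGroup H] [InnerProductSpace ℂ H] [CompleteSpace H]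

theorem isStarProjection_sum_range {p : ℕ → H →L[ℂ] H} (hp : ∀ n, IsStarProjection (p n))
    (horth : ∀ m n, m ≠ n → p m * p n = 0) (N : ℕ) :
    IsStarProjection (∑ n ∈ Finset.range N, p n) where
  isIdempotentElem := by
    rw [IsIdempotentElem, Finset.sum_mul_sum]
    refine Finset.sum_congr rfl fun i hi ↦ ?_
    rw [Finset.sum_eq_single_of_mem i hi fun j _ hj ↦ horth i j hj.symm]
    exact (hp i).isIdempotentElem
  isSelfAdjoint := isSelfAdjoint_sum _ fun n _ ↦ (hp n).isSelfAdjoint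

/-- Adjoints of compact operators are compact, on a space with a strong approximation of the
identity by compact projections. -/
theorem IsCompactOperator.star_of_tendsto_apply {P : ℕ → H →L[ℂ] H}
    (hP : ∀ n, IsStarProjection (P n)) (hcpt : ∀ n, IsCompactOperator (P n))
    (hlim : ∀ x, Tendsto (fun n ↦ (1 - P n) x) atTop (𝓝 0))
    {T : H →L[ℂ] H} (hT : IsCompactOperator T) :
    IsCompactOperator (star T : H →L[ℂ] H) := by
  have h := hT.tendsto_mul_of_tendsto_apply (fun n ↦ (hP n).one_sub.norm_le) hlim
  have h' : Tendsto (fun n ↦ star T * P n) atTop (𝓝 (star T)) := by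
    have := (h.star.const_sub (star T))
    simpa [sub_mul, mul_sub, (hP _).isSelfAdjoint.star_eq] using this
  exact isCompactOperator_of_tendsto h' (.of_forall fun n ↦ (hcpt n).clm_mul _)

end Projections


/- Statement 19 (key step of Proposition A.2, Eckhardt): Let `H` be a Hilbert space,
`(pₙ)` a sequence of pairwise orthogonal finite-rank (orthogonal) projections summing
strongly to the identity, and `B ⊆ B(H)` a C*-algebra (a closed star-subalgebra) commuting
with every `pₙ` and containing `pₙ K(H) pₙ` for all `n`.  If `U ∈ B + K(H)` is a unitary,
then there is a unitary `V ∈ B` with `U − V ∈ K(H)`. -/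
theorem unitary_compact_perturbation_into_block_algebra
    {H : Type*} [NormedAddCommGroup H] [InnerProductSpace ℂ H] [CompleteSpace H]
    (p : ℕ → H →L[ℂ] H)
    (hsa : ∀ n, IsSelfAdjoint (p n)) (hidem : ∀ n, p n * p n = p n)
    (hfin : ∀ n, FiniteDimensional ℂ (LinearMap.range (p n : H →ₗ[ℂ] H)))
    (horth : ∀ m n, m ≠ n → p m * p n = 0)
    (hsum : ∀ ξ : H, HasSum (fun n => p n ξ) ξ)
    (B : StarSubalgebra ℂ (H →L[ℂ] H)) (hB : IsClosed (B : Set (H →L[ℂ] H)))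
    (hcomm : ∀ n, ∀ b ∈ B, b * p n = p n * b)
    (hcorner : ∀ (n : ℕ) (T : H →L[ℂ] H), IsCompactOperator T → p n * T * p n ∈ B)
    (U : H →L[ℂ] H)
    (hUBK : ∃ b ∈ B, ∃ kk : H →L[ℂ] H, IsCompactOperator kk ∧ U = b + kk)
    (hUu : star U * U = 1 ∧ U * star U = 1) :
    ∃ V ∈ B, star V * V = 1 ∧ V * star V = 1 ∧ IsCompactOperator (U - V) := by
  obtain ⟨b, hb, k, hk, rfl⟩ := hUBK
  obtain ⟨hU₁, hU₂⟩ := hUu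
  set P : ℕ → H →L[ℂ] H := fun N ↦ ∑ n ∈ Finset.range N, p n with hP_def
  have hp_cpt (n : ℕ) : IsCompactOperator (p n) := .of_finiteDimensional_range (hfin n)
  have hp_mem (n : ℕ) : p n ∈ B := by
    simpa [hidem] using hcorner n (p n) (hp_cpt n)
  have hP (N : ℕ) : IsStarProjection (P N) :=
    isStarProjection_sum_range (fun n ↦ ⟨hidem n, hsa n⟩) horth N
  have hP_mem (N : ℕ) : P N ∈ B := sum_mem fun n _ ↦ hp_mem n
  have hP_cpt (N : ℕ) : IsCompactOperator (P N) :=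
    Submodule.sum_mem (compactOperator (RingHom.id ℂ) H H) fun n _ ↦ hp_cpt n
  have hP_comm (N : ℕ) {x : H →L[ℂ] H} (hx : x ∈ B) : x * P N = P N * x := by
    simp only [hP_def, Finset.mul_sum, Finset.sum_mul, hcomm _ x hx]
  have hP_lim (x : H) : Tendsto (fun N ↦ (1 - P N) x) atTop (𝓝 0) := by
    simpa [hP_def] using (hsum x).tendsto_sum_nat.const_sub x
  have hk' : IsCompactOperator (star k : H →L[ℂ] H) := hk.star_of_tendsto_apply hP hP_cpt hP_lim
  have hT₁ : IsCompactOperator (1 - star b * b : H →L[ℂ] H) := by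
    have : 1 - star b * b = star k * (b + k) - -(star b * k) := by
      rw [← hU₁, star_add]; noncomm_ring
    rw [this]
    exact (hk'.mul_clm _).sub_clm (hk.clm_mul _).neg_clm
  have hT₂ : IsCompactOperator (1 - b * star b : H →L[ℂ] H) := by
    have : 1 - b * star b = k * star (b + k) - -(b * star k) := by
      rw [← hU₂, star_add]; noncomm_ring
    rw [this]
    exact (hk.mul_clm _).sub_clm (hk'.clm_mul _).neg_clm
  obtain ⟨N, hN₁, hN₂⟩ : ∃ N, ‖(1 - P N) * (1 - star b * b)‖ < 1 ∧
      ‖(1 - P N) * (1 - b * star b)‖ < 1 := by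
    have h {T : H →L[ℂ] H} (hT : IsCompactOperator T) :
        ∀ᶠ N in atTop, ‖(1 - P N) * T‖ < 1 := by
      have := (hT.tendsto_mul_of_tendsto_apply (fun n ↦ (hP n).one_sub.norm_le) hP_lim).norm
      rw [norm_zero] at this
      exact this.eventually_lt_const one_pos
    exact ((h hT₁).and (h hT₂)).exists
  have hPid : P N * P N = P N := (hP N).isIdempotentElem
  have hPsa : star (P N) = P N := (hP N).isSelfAdjoint
  have hbP := hP_comm N hb
  have hbP' := hP_comm N (star_mem hb)
  set c : H →L[ℂ] H := b * (1 - P N) + P N with hc_def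
  have hc_mem : c ∈ B := add_mem (mul_mem hb (sub_mem (one_mem B) (hP_mem N))) (hP_mem N)
  have hc_star : star c = star b * (1 - P N) + P N := by
    simp only [hc_def, star_add, star_mul, star_sub, hPsa, mul_sub, mul_one, hbP']
  have key {x y : H →L[ℂ] H} (hx : x * P N = P N * x) (hy : y * P N = P N * y) :
      (x * (1 - P N) + P N) * (y * (1 - P N) + P N) = 1 - (1 - P N) * (1 - x * y) := by
    have hQ : (1 - P N) * (1 - P N) = 1 - P N := (hP N).one_sub.isIdempotentElem
    have hQP : (1 - P N) * P N = 0 := by rw [sub_mul, hPid, one_mul, sub_self]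
    have hPQ : P N * (1 - P N) = 0 := by rw [mul_sub, hPid, mul_one, sub_self]
    have hx' : x * (1 - P N) = (1 - P N) * x := by rw [mul_sub, sub_mul, hx, mul_one, one_mul]
    have hy' : y * (1 - P N) = (1 - P N) * y := by rw [mul_sub, sub_mul, hy, mul_one, one_mul]
    calc _ = x * ((1 - P N) * y) * (1 - P N) + x * ((1 - P N) * P N) + P N * (y * (1 - P N))
          + P N * P N := by noncomm_ring
      _ = (x * y) * ((1 - P N) * (1 - P N)) + x * ((1 - P N) * P N) + P N * (1 - P N) * y
          + P N * P N := by
        rw [← hy']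
        nth_rw 2 [hy']
        simp only [mul_assoc]
      _ = (1 - P N) * (x * y) + P N := by
        rw [hQ, hQP, hPQ, hPid, mul_assoc, hy', ← mul_assoc, hx']
        simp [mul_assoc]
      _ = _ := by noncomm_ring
  have hcc₁ : star c * c = 1 - (1 - P N) * (1 - star b * b) := by
    rw [hc_star]; exact key hbP' hbP
  have hcc₂ : c * star c = 1 - (1 - P N) * (1 - b * star b) := by
    rw [hc_star]; exact key hbP hbP'
  have hu₁ : IsUnit (star c * c) := hcc₁ ▸ isUnit_one_sub_of_norm_lt_one hN₁
  have hu₂ : IsUnit (c * star c) := hcc₂ ▸ isUnit_one_sub_of_norm_lt_one hN₂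
  have hc_unit : IsUnit c := by
    obtain ⟨y, hy⟩ := hu₁.exists_left_inv
    obtain ⟨z, hz⟩ := hu₂.exists_right_inv
    exact isUnit_iff_exists_and_exists.2
      ⟨⟨star c * z, by rw [← mul_assoc, hz]⟩, ⟨y * star c, by rw [mul_assoc, hy]⟩⟩
  have hd_nonneg : 0 ≤ star c * c := star_mul_self_nonneg c
  set s : H →L[ℂ] H := (star c * c) ^ (-(1 / 2) : ℝ) with hs_def
  have hs_mem : s ∈ B := by
    have : IsClosed (B : Set (H →L[ℂ] H)) := hB
    rw [hs_def, CFC.rpow_eq_cfc_real hd_nonneg]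
    exact cfc_mem (𝕜' := ℂ) _ (mul_mem (star_mem hc_mem) hc_mem)
  have hs_unit : IsUnit s := hu₁.cfcRpow _ hd_nonneg
  have hV₁ : star (c * s) * (c * s) = 1 := star_mul_self_of_polar hc_unit
  have hs_cpt : IsCompactOperator (s - 1 : H →L[ℂ] H) := by
    obtain ⟨r, hr⟩ := rpow_neg_half_sub_one hu₁ hd_nonneg
    rw [hs_def, hr, show 1 - star c * c = (1 - P N) * (1 - star b * b) by rw [hcc₁]; abel]
    exact ((hT₁.clm_mul _).clm_mul _).mul_clm _
  refine ⟨c * s, mul_mem hc_mem hs_mem, hV₁,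
    ((hc_unit.mul hs_unit).mem_unitary_of_star_mul_self hV₁).2, ?_⟩
  have : b + k - c * s = (k - (1 - b) * P N) - c * (s - 1) := by
    simp only [hc_def]; noncomm_ring
  rw [this]
  exact (hk.sub_clm ((hP_cpt N).clm_mul _)).sub_clm (hs_cpt.clm_mul _)
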